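/- arXiv:1508.06955 — 3 statements merged into one kernel-verified Lean document; each statement's English description precedes it below -/
import Mathlib

section
/- Let f be holomorphic on 𝔻 and continuous on the closed unit disc, and let f* denote its restriction to ∂𝔻. Then for every r ∈ (0,1) and every φ ∈ ℝ, |f'(r·e^{iφ})| ≤ (1/π) · ∫₀^π ω_{f*}(τ) / (r² − 2r·cos τ + 1) dτ. -/
/-!
Let `z = r e^{iφ}` and `w = e^{iφ}`. Cauchy's formula for the first derivative, valid for functions
that are only continuous up to the boundary, reads `2πi f'(z) = ∮ (F ζ - c) / (ζ - z)² dζ` for every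
constant `c`, since `∮ dζ / (ζ - z)² = 0` (`circleIntegral_sub_const_div_sq`). It is applied with
`c = F w`. On the circle, with `ζ = e^{i(φ + x)}`, one has `|ζ - z|² = r² - 2 r cos x + 1`
(`norm_sq_circle_sub`) and `|F ζ - F w| ≤ ω_F(|x|)`. By periodicity the angle `x` may be taken in
`[-π, π]`, and each of the halves `[-π, 0]` and `[0, π]` contributes at most
`∫₀^π ω_F(x) / (r² - 2 r cos x + 1) dx`, whose integrand is integrable because `ω_F` is monotone.
-/

open MeasureTheory

/-- The modulus of continuity of a function `g` on the unit circle,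
parametrized by the angle: `ω_g(δ) = sup {|g(e^{iθ}) - g(e^{iφ})| : |θ - φ| ≤ δ}`. -/
noncomputable def omegaMod (g : ℂ → ℂ) (δ : ℝ) : ℝ :=
  sSup {d : ℝ | ∃ θ φ : ℝ, |θ - φ| ≤ δ ∧
    d = ‖g (Complex.exp (θ * Complex.I)) - g (Complex.exp (φ * Complex.I))‖}

/-- Continuity of `F` bounds the set whose supremum defines `omegaMod F δ`, so that the supremum
is not a junk value. -/
lemma bddAbove_omegaMod {F : ℂ → ℂ} (hF : ContinuousOn F (Metric.closedBall (0:ℂ) 1)) (δ : ℝ) :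
    BddAbove {d : ℝ | ∃ θ φ : ℝ, |θ - φ| ≤ δ ∧
      d = ‖F (Complex.exp (θ * Complex.I)) - F (Complex.exp (φ * Complex.I))‖} := by
  obtain ⟨C, hC⟩ := (isCompact_closedBall (0:ℂ) 1).exists_bound_of_continuousOn hF
  refine ⟨C + C, ?_⟩
  rintro d ⟨θ, φ, -, rfl⟩
  exact (norm_sub_le _ _).trans (add_le_add
    (hC _ (by simp [Complex.norm_exp_ofReal_mul_I])) (hC _ (by simp [Complex.norm_exp_ofReal_mul_I])))

lemma le_omegaMod {F : ℂ → ℂ} (hF : ContinuousOn F (Metric.closedBall (0:ℂ) 1)) {δ θ φ : ℝ}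
    (h : |θ - φ| ≤ δ) :
    ‖F (Complex.exp (θ * Complex.I)) - F (Complex.exp (φ * Complex.I))‖ ≤ omegaMod F δ :=
  le_csSup (bddAbove_omegaMod hF δ) ⟨θ, φ, h, rfl⟩

lemma monotoneOn_omegaMod {F : ℂ → ℂ} (hF : ContinuousOn F (Metric.closedBall (0:ℂ) 1)) :
    MonotoneOn (omegaMod F) (Set.Ici 0) := by
  intro a ha b _ hab
  refine csSup_le_csSup (bddAbove_omegaMod hF b) ⟨_, 0, 0, by simpa using ha, rfl⟩ ?_
  rintro d ⟨θ, φ, h, rfl⟩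
  exact ⟨θ, φ, h.trans hab, rfl⟩

lemma norm_sq_circle_sub (r φ x : ℝ) :
    ‖Complex.exp (((φ + x : ℝ) : ℂ) * Complex.I) - (r : ℂ) * Complex.exp (φ * Complex.I)‖ ^ 2
      = r ^ 2 - 2 * r * Real.cos x + 1 := by
  have h : Complex.exp (((φ + x : ℝ) : ℂ) * Complex.I) - (r : ℂ) * Complex.exp (φ * Complex.I)
      = Complex.exp (φ * Complex.I) * (Complex.exp (x * Complex.I) - r) := by
    push_cast
    rw [add_mul, Complex.exp_add]
    ring
  rw [h, norm_mul, Complex.norm_exp_ofReal_mul_I, one_mul, ← Complex.normSq_eq_norm_sq,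
    Complex.normSq_apply]
  simp only [Complex.sub_re, Complex.sub_im, Complex.exp_ofReal_mul_I_re,
    Complex.exp_ofReal_mul_I_im, Complex.ofReal_re, Complex.ofReal_im]
  nlinarith [Real.sin_sq_add_cos_sq x]

/-- Cauchy's formula for the derivative at a point that need not be the centre: it is the formula
for the value at `z` of the divided difference `dslope F z`, combined with
`∮ (ζ - z)⁻² dζ = 0`. -/
lemma circleIntegral_sub_const_div_sq {F : ℂ → ℂ}
    (hF : ContinuousOn F (Metric.closedBall (0:ℂ) 1))
    (hd : DifferentiableOn ℂ F (Metric.ball (0:ℂ) 1)) {z : ℂ} (hz : z ∈ Metric.ball (0:ℂ) 1)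
    (c : ℂ) :
    (∮ ζ in C(0, 1), (F ζ - c) / (ζ - z) ^ 2) = (2 * Real.pi * Complex.I) * deriv F z := by
  have hdz : DifferentiableAt ℂ F z := hd.differentiableAt (Metric.isOpen_ball.mem_nhds hz)
  have hsph : ∀ ζ ∈ Metric.sphere (0:ℂ) 1, ζ - z ≠ 0 := by
    intro ζ hζ h
    rw [sub_eq_zero] at h
    subst h
    simp at hζ hz
    linarith
  have h1 := Complex.circleIntegral_sub_inv_smul_of_differentiable_on_off_countable
    (f := dslope F z) (c := 0) (R := 1) (s := {z}) (Set.countable_singleton z) hz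
    ((continuousOn_dslope (Metric.closedBall_mem_nhds_of_mem hz)).2 ⟨hF, hdz⟩)
    (fun x hx => (differentiableAt_dslope_of_ne hx.2).2
      (hd.differentiableAt (Metric.isOpen_ball.mem_nhds hx.1)))
  rw [dslope_same, smul_eq_mul] at h1
  have h2 : (∮ ζ in C(0, 1), (ζ - z) ^ (-2 : ℤ)) = 0 :=
    circleIntegral.integral_sub_zpow_of_ne (by norm_num) 0 z 1
  rw [← h1]
  have hcF : ContinuousOn (fun ζ => (ζ - z)⁻¹ • dslope F z ζ) (Metric.sphere (0:ℂ) 1) := by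
    refine ContinuousOn.smul ((continuousOn_id.sub continuousOn_const).inv₀ hsph) ?_
    exact ((continuousOn_dslope (Metric.closedBall_mem_nhds_of_mem hz)).2 ⟨hF, hdz⟩).mono
      Metric.sphere_subset_closedBall
  have hc2 : ContinuousOn (fun ζ => (F z - c) * (ζ - z) ^ (-2 : ℤ)) (Metric.sphere (0:ℂ) 1) :=
    continuousOn_const.mul ((continuousOn_id.sub continuousOn_const).zpow₀ _
      (fun ζ hζ => Or.inl (hsph ζ hζ)))
  have h3 : (∮ ζ in C(0, 1), (F ζ - c) / (ζ - z) ^ 2)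
      = ∮ ζ in C(0, 1), ((ζ - z)⁻¹ • dslope F z ζ + (F z - c) * (ζ - z) ^ (-2 : ℤ)) := by
    refine circleIntegral.integral_congr zero_le_one fun ζ hζ => ?_
    have hne := hsph ζ hζ
    simp only [dslope_of_ne F (sub_ne_zero.1 hne), slope_def_field, smul_eq_mul, zpow_neg]
    norm_cast
    field_simp
    ring
  rw [h3, circleIntegral.integral_add (hcF.circleIntegrable zero_le_one)
    (hc2.circleIntegrable zero_le_one), circleIntegral.integral_const_mul, h2, mul_zero, add_zero]

/-- If `f` is holomorphic on the disc and continuous up to the boundary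
(with continuous extension `F`), then `|f'(r e^{iφ})| ≤ (1/π) ∫₀^π ω_{f*}(τ)/(r² - 2r cos τ + 1) dτ`. -/
theorem stmt8 (f F : ℂ → ℂ) (hf : DifferentiableOn ℂ f (Metric.ball (0:ℂ) 1))
    (hF : ContinuousOn F (Metric.closedBall (0:ℂ) 1))
    (hFf : ∀ z ∈ Metric.ball (0:ℂ) 1, F z = f z) :
    ∀ r : ℝ, 0 < r → r < 1 → ∀ φ : ℝ,
      ‖deriv f ((r : ℂ) * Complex.exp (φ * Complex.I))‖ ≤
        (1 / Real.pi) * ∫ τ in (0:ℝ)..Real.pi,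
          omegaMod F τ / (r ^ 2 - 2 * r * Real.cos τ + 1) := by
  intro r hr0 hr1 φ
  set z : ℂ := (r : ℂ) * Complex.exp (φ * Complex.I) with hz_def
  set w : ℂ := Complex.exp (φ * Complex.I) with hw_def
  have hz : z ∈ Metric.ball (0:ℂ) 1 := by
    simp [hz_def, hw_def, Complex.norm_exp_ofReal_mul_I, abs_of_pos hr0, hr1]
  have hderiv : deriv f z = deriv F z := by
    refine Filter.EventuallyEq.deriv_eq ?_
    filter_upwards [Metric.isOpen_ball.mem_nhds hz] with x hx
    exact (hFf x hx).symm
  have hd : DifferentiableOn ℂ F (Metric.ball (0:ℂ) 1) := hf.congr hFf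
  have hD : ∀ x : ℝ, 0 < r ^ 2 - 2 * r * Real.cos x + 1 := by
    intro x
    nlinarith [Real.cos_le_one x, sq_nonneg (1 - r), mul_pos (sub_pos.2 hr1) (sub_pos.2 hr1)]
  -- the integrand of the Cauchy integral, as a function of the angle
  set k : ℝ → ℂ := fun θ => deriv (circleMap 0 1) θ •
    ((F (circleMap 0 1 θ) - F w) / (circleMap 0 1 θ - z) ^ 2) with hk
  have hcauchy : (∫ θ in (0:ℝ)..2 * Real.pi, k θ) = (2 * Real.pi * Complex.I) * deriv F z :=
    circleIntegral_sub_const_div_sq hF hd hz (F w)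
  have hper : Function.Periodic k (2 * Real.pi) := by
    intro θ
    simp only [hk, deriv_circleMap, periodic_circleMap 0 1 θ]
  have hknorm : ∀ x : ℝ, ‖k (φ + x)‖ ≤ omegaMod F |x| / (r ^ 2 - 2 * r * Real.cos x + 1) := by
    intro x
    have hcm : circleMap 0 1 (φ + x) = Complex.exp (((φ + x : ℝ) : ℂ) * Complex.I) := by
      simp [circleMap]
    have h1 : ‖k (φ + x)‖ = ‖F (Complex.exp (((φ + x : ℝ) : ℂ) * Complex.I)) - F w‖ /
        (r ^ 2 - 2 * r * Real.cos x + 1) := by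
      rw [← norm_sq_circle_sub r φ x]
      simp only [hk, norm_smul, deriv_circleMap, norm_mul, norm_div, norm_pow, hcm,
        Complex.norm_exp_ofReal_mul_I, Complex.norm_I, one_mul]
      rfl
    rw [h1]
    exact div_le_div_of_nonneg_right (le_omegaMod hF (by simp)) (hD x).le
  have hkcont : Continuous k := by
    have hmem : ∀ θ, circleMap (0:ℂ) 1 θ ∈ Metric.closedBall (0:ℂ) 1 := fun θ => by
      simp
    have hne : ∀ θ, (circleMap (0:ℂ) 1 θ - z) ^ 2 ≠ 0 := by
      intro θ h
      have h' := sub_eq_zero.1 (pow_eq_zero_iff (two_ne_zero) |>.1 h)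
      rw [← h'] at hz
      simp at hz
    have hFc : Continuous fun θ => F (circleMap 0 1 θ) :=
      hF.comp_continuous (continuous_circleMap 0 1) hmem
    have hdc : Continuous (deriv (circleMap 0 1)) := by
      have : deriv (circleMap 0 1) = fun θ => circleMap 0 1 θ * Complex.I := by
        funext θ
        simp [deriv_circleMap]
      rw [this]
      fun_prop
    exact hdc.smul ((hFc.sub continuous_const).div (by fun_prop) hne)
  have hgint : IntervalIntegrable (fun τ => omegaMod F τ / (r ^ 2 - 2 * r * Real.cos τ + 1))
      volume 0 Real.pi := by
    simp only [div_eq_mul_inv]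
    refine IntervalIntegrable.mul_continuousOn (MonotoneOn.intervalIntegrable ?_) ?_
    · refine (monotoneOn_omegaMod hF).mono ?_
      rw [Set.uIcc_of_le Real.pi_pos.le]
      exact fun x hx => hx.1
    · exact (Continuous.inv₀ (by fun_prop) (fun x => (hD x).ne')).continuousOn
  have hsplit : (∫ θ in (0:ℝ)..2 * Real.pi, k θ)
      = (∫ x in (0:ℝ)..Real.pi, k (φ + -x)) + ∫ x in (0:ℝ)..Real.pi, k (φ + x) := by
    have hc : Continuous fun x => k (φ + x) := by fun_prop
    rw [intervalIntegral.integral_comp_neg (fun x => k (φ + x)), neg_zero,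
      intervalIntegral.integral_add_adjacent_intervals (hc.intervalIntegrable _ _)
        (hc.intervalIntegrable _ _),
      intervalIntegral.integral_comp_add_left]
    have := hper.intervalIntegral_add_eq 0 (φ + -Real.pi)
    rw [zero_add] at this
    rw [this]
    congr 1
    ring
  have hpos : ‖∫ x in (0:ℝ)..Real.pi, k (φ + x)‖ ≤
      ∫ τ in (0:ℝ)..Real.pi, omegaMod F τ / (r ^ 2 - 2 * r * Real.cos τ + 1) := by
    refine intervalIntegral.norm_integral_le_of_norm_le Real.pi_pos.le
      (Filter.Eventually.of_forall fun x hx => ?_) hgint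
    simpa [abs_of_pos hx.1] using hknorm x
  have hneg : ‖∫ x in (0:ℝ)..Real.pi, k (φ + -x)‖ ≤
      ∫ τ in (0:ℝ)..Real.pi, omegaMod F τ / (r ^ 2 - 2 * r * Real.cos τ + 1) := by
    refine intervalIntegral.norm_integral_le_of_norm_le Real.pi_pos.le
      (Filter.Eventually.of_forall fun x hx => ?_) hgint
    simpa [abs_of_pos hx.1] using hknorm (-x)
  have htot := (norm_add_le _ _).trans (add_le_add hneg hpos)
  rw [← hsplit, hcauchy] at htot
  have hn : ‖(2 * Real.pi * Complex.I) * deriv F z‖ = 2 * Real.pi * ‖deriv F z‖ := by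
    simp [abs_of_pos Real.pi_pos]
  rw [hn] at htot
  rw [hderiv, one_div, ← div_eq_inv_mul, le_div_iff₀ Real.pi_pos]
  linarith
end

section
/- Let g : ∂𝔻 → ℂ be continuous and let ω_g denote its modulus of continuity. Then there exists a constant C > 0, independent of x, such that for every x ∈ (0, 3/4), ∫₀^{1/x} ω_g(π·x·y) / (1 + y²) dy ≤ C · ω_g(x) · (1 + log(1/x)). -/
/-!
Chaining `⌊λ⌋ + 1` arcs of length at most `x` gives `ω_g(δ) ≤ (λ + 1) ω_g(x)` whenever `δ ≤ λ x`
(`omegaMod_le_mul`). With `λ = π y` the integrand is at most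
`ω_g(x) (1 + π y) / (1 + y²) ≤ 6 ω_g(x) / (1 + y)`, and
`∫₀^{1/x} dy / (1 + y) = log (1 + 1/x) ≤ log 2 + log (1/x)`, so `C = 6` works.
-/

open MeasureTheory

/-- The modulus of continuity extended to arguments larger than `π` by the constant value
`ω_g(π)`. -/
noncomputable def omegaModExt (g : ℂ → ℂ) (δ : ℝ) : ℝ :=
  omegaMod g (min δ Real.pi)

lemma omegaMod_bddAbove (g : ℂ → ℂ) (hg : ContinuousOn g (Metric.sphere (0:ℂ) 1)) (δ : ℝ) :
    BddAbove {d : ℝ | ∃ θ φ : ℝ, |θ - φ| ≤ δ ∧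
      d = ‖g (Complex.exp (θ * Complex.I)) - g (Complex.exp (φ * Complex.I))‖} := by
  obtain ⟨M, hM⟩ := (isCompact_sphere (0:ℂ) 1).exists_bound_of_continuousOn hg
  have hmem : ∀ t : ℝ, Complex.exp (t * Complex.I) ∈ Metric.sphere (0:ℂ) 1 := fun t => by
    simp [Complex.norm_exp_ofReal_mul_I]
  refine ⟨M + M, ?_⟩
  rintro d ⟨θ, φ, -, rfl⟩
  exact (norm_sub_le _ _).trans (add_le_add (hM _ (hmem θ)) (hM _ (hmem φ)))

lemma omegaMod_nonneg (g : ℂ → ℂ) (δ : ℝ) : 0 ≤ omegaMod g δ := by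
  apply Real.sSup_nonneg
  rintro d ⟨θ, φ, -, rfl⟩
  exact norm_nonneg _

lemma norm_sub_le_omegaMod (g : ℂ → ℂ) (hg : ContinuousOn g (Metric.sphere (0:ℂ) 1))
    {δ θ φ : ℝ} (h : |θ - φ| ≤ δ) :
    ‖g (Complex.exp (θ * Complex.I)) - g (Complex.exp (φ * Complex.I))‖ ≤ omegaMod g δ :=
  le_csSup (omegaMod_bddAbove g hg δ) ⟨θ, φ, h, rfl⟩

/-- Chaining: an arc of length at most `n x` splits into `n` arcs of length at most `x`. -/
lemma norm_sub_le_nat_mul_omegaMod (g : ℂ → ℂ) (hg : ContinuousOn g (Metric.sphere (0:ℂ) 1))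
    (x : ℝ) (n : ℕ) : ∀ θ φ : ℝ, |θ - φ| ≤ n * x →
      ‖g (Complex.exp (θ * Complex.I)) - g (Complex.exp (φ * Complex.I))‖
        ≤ n * omegaMod g x := by
  induction n with
  | zero =>
    intro θ φ h
    have h0 : θ - φ = 0 := abs_nonpos_iff.mp (by simpa using h)
    simp [sub_eq_zero.mp h0]
  | succ n ih =>
    intro θ φ h
    push_cast at h ⊢
    have hn : (0:ℝ) < n + 1 := by positivity
    -- the intermediate angle, one `(n + 1)`-th of the way from `θ` to `φ`
    obtain ⟨ψ, hψ⟩ : ∃ ψ : ℝ, ψ = θ - (θ - φ) / (n + 1) := ⟨_, rfl⟩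
    have hx : |θ - φ| / (n + 1) ≤ x := by
      rw [div_le_iff₀ hn]; linarith
    have h1 : |θ - ψ| ≤ x := by
      have : θ - ψ = (θ - φ) / (n + 1) := by rw [hψ]; ring
      rw [this, abs_div, abs_of_pos hn]; exact hx
    have h2 : |ψ - φ| ≤ n * x := by
      have : ψ - φ = n * ((θ - φ) / (n + 1)) := by rw [hψ]; field_simp; ring
      rw [this, abs_mul, abs_div, abs_of_pos hn, abs_of_nonneg (Nat.cast_nonneg n)]
      exact mul_le_mul_of_nonneg_left hx (Nat.cast_nonneg n)
    have h3 := norm_sub_le_omegaMod g hg h1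
    have h4 := ih ψ φ h2
    have h5 := norm_sub_le_norm_sub_add_norm_sub (g (Complex.exp (θ * Complex.I)))
      (g (Complex.exp (ψ * Complex.I))) (g (Complex.exp (φ * Complex.I)))
    linarith

lemma omegaMod_le_mul (g : ℂ → ℂ) (hg : ContinuousOn g (Metric.sphere (0:ℂ) 1))
    {x l δ : ℝ} (hx : 0 ≤ x) (hl : 0 ≤ l) (hδ : δ ≤ l * x) :
    omegaMod g δ ≤ (l + 1) * omegaMod g x := by
  have hω := omegaMod_nonneg g x
  apply Real.sSup_le _ (by positivity)
  rintro d ⟨θ, φ, h, rfl⟩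
  have hle : l ≤ ((⌊l⌋₊ + 1 : ℕ) : ℝ) := by
    push_cast; exact (Nat.lt_floor_add_one l).le
  refine (norm_sub_le_nat_mul_omegaMod g hg x (⌊l⌋₊ + 1) θ φ
    (h.trans (hδ.trans (mul_le_mul_of_nonneg_right hle hx)))).trans ?_
  apply mul_le_mul_of_nonneg_right _ hω
  push_cast
  linarith [Nat.floor_le hl]

lemma integral_inv_one_add {b : ℝ} (hb : 0 ≤ b) :
    ∫ y in (0:ℝ)..b, (1 + y)⁻¹ = Real.log (1 + b) := by
  rw [intervalIntegral.integral_comp_add_left (fun y => y⁻¹) 1,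
    integral_inv_of_pos (by norm_num) (by linarith)]
  simp

/-- For continuous `g` on the unit circle there is a constant `C > 0` such
that `∫₀^{1/x} ω_g(πxy)/(1+y²) dy ≤ C ω_g(x)(1 + log(1/x))` for all `x ∈ (0, 3/4)`. -/
theorem stmt10 (g : ℂ → ℂ) (hg : ContinuousOn g (Metric.sphere (0:ℂ) 1)) :
    ∃ C : ℝ, 0 < C ∧ ∀ x : ℝ, 0 < x → x < 3/4 →
      (∫ y in (0:ℝ)..(1/x), omegaModExt g (Real.pi * x * y) / (1 + y ^ 2)) ≤
        C * omegaMod g x * (1 + Real.log (1/x)) := by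
  refine ⟨6, by norm_num, fun x hx hx1 => ?_⟩
  have hω := omegaMod_nonneg g x
  have hb : (1:ℝ) ≤ 1 / x := by rw [le_div_iff₀ hx]; linarith
  have hb0 : (0:ℝ) ≤ 1 / x := by linarith
  have hint : IntervalIntegrable (fun y : ℝ => 6 * omegaMod g x * (1 + y)⁻¹) volume 0 (1/x) := by
    apply ContinuousOn.intervalIntegrable
    rw [Set.uIcc_of_le hb0]
    apply ContinuousOn.mul continuousOn_const
    apply ContinuousOn.inv₀ (by fun_prop)
    intro y hy
    linarith [hy.1]
  have hpt : ∀ y : ℝ, 0 ≤ y → omegaModExt g (Real.pi * x * y) / (1 + y ^ 2)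
      ≤ 6 * omegaMod g x * (1 + y)⁻¹ := by
    intro y hy
    have h1 : omegaModExt g (Real.pi * x * y) ≤ (Real.pi * y + 1) * omegaMod g x :=
      omegaMod_le_mul g hg hx.le (by positivity) ((min_le_left _ _).trans (by linarith))
    have hpi := Real.pi_lt_d2
    have h2 : (Real.pi * y + 1) * (1 + y) ≤ 6 * (1 + y ^ 2) := by
      have h3 : Real.pi * y ≤ 3.15 * y := mul_le_mul_of_nonneg_right hpi.le hy
      have h4 : (Real.pi * y + 1) * (1 + y) ≤ (3.15 * y + 1) * (1 + y) :=
        mul_le_mul_of_nonneg_right (by linarith) (by linarith)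
      nlinarith [sq_nonneg (y - 1)]
    rw [← div_eq_mul_inv, div_le_div_iff₀ (by positivity) (by positivity)]
    calc omegaModExt g (Real.pi * x * y) * (1 + y)
        ≤ ((Real.pi * y + 1) * omegaMod g x) * (1 + y) :=
          mul_le_mul_of_nonneg_right h1 (by linarith)
      _ = omegaMod g x * ((Real.pi * y + 1) * (1 + y)) := by ring
      _ ≤ omegaMod g x * (6 * (1 + y ^ 2)) := mul_le_mul_of_nonneg_left h2 hω
      _ = 6 * omegaMod g x * (1 + y ^ 2) := by ring
  have hmono : (∫ y in (0:ℝ)..(1/x), omegaModExt g (Real.pi * x * y) / (1 + y ^ 2)) ≤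
      ∫ y in (0:ℝ)..(1/x), 6 * omegaMod g x * (1 + y)⁻¹ := by
    rw [intervalIntegral.integral_of_le hb0, intervalIntegral.integral_of_le hb0]
    -- `integral_mono_of_nonneg` needs integrability of the majorant only
    apply integral_mono_of_nonneg
    · exact Filter.Eventually.of_forall fun y =>
        div_nonneg (omegaMod_nonneg g _) (by positivity)
    · exact (intervalIntegrable_iff_integrableOn_Ioc_of_le hb0).mp hint
    · exact (ae_restrict_mem measurableSet_Ioc).mono fun y hy => hpt y hy.1.le
  refine hmono.trans ?_
  rw [intervalIntegral.integral_const_mul, integral_inv_one_add hb0]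
  apply mul_le_mul_of_nonneg_left _ (by positivity)
  calc Real.log (1 + 1 / x) ≤ Real.log (2 * (1 / x)) :=
        Real.log_le_log (by linarith) (by linarith)
    _ = Real.log 2 + Real.log (1 / x) := Real.log_mul (by norm_num) (by linarith)
    _ ≤ 1 + Real.log (1 / x) := by linarith [Real.log_two_lt_d9]
end

section
/- There exists a function f holomorphic on 𝔻 that extends continuously to the closed unit disc such that its boundary value f* (the restriction of the extension to ∂𝔻) is log-Dini continuous, and yet f* is not Hölder continuous of exponent α for any α ∈ (0,1]. -/
/-!
The function is the lacunary series `F(z) = ∑ₖ z ^ Nₖ / k!` with `Nₖ = 2 ^ 2 ^ k`. It converges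
uniformly on the closed disc, so it is continuous there and holomorphic inside.

On the circle, the `k`-th term varies by at most `min (2, Nₖ δ) / k!` over an arc of length `δ`.
Since `Nₖ ^ (2⁻ᵏ) = 2`, interpolation with exponent `2⁻ᵏ` gives
`ω_F(δ) ≤ ∑ₖ 4 δ ^ (2⁻ᵏ) / k!` (`omegaMod_lac_le`). The integral of
`log(1/x)ⁿ x ^ (2⁻ᵏ - 1)` over `(0, 1)` is at most a constant times `(2 ^ (n + 1)) ^ k`
(`lintegral_log_rpow_le`), and `∑ₖ (2 ^ (n + 1)) ^ k / k!` converges, so `F` is log-Dini.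

All coefficients being positive, comparing `F` at angles `0` and `π / Nₖ` gives a difference whose
real part is at least `2 / k!` (`two_div_factorial_le`). Hölder continuity of exponent `α` would
force `Nₖ ^ α = O(k!)`, which fails because `log k! ≤ k²` while `log Nₖ = 2 ^ k log 2`.
-/

open MeasureTheory

/-- A function `g` on the unit circle is log-Dini continuous if
`∫₀¹ (log(1/x))ⁿ ω_g(x)/x dx < ∞` for every integer `n ≥ 0`. -/
def LogDini (g : ℂ → ℂ) : Prop :=
  ∀ n : ℕ, ∫⁻ x in Set.Ioo (0:ℝ) 1,
    ENNReal.ofReal ((Real.log (1/x)) ^ n * omegaMod g x / x) ≠ ⊤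

/-- The lacunary exponents `Nₖ = 2 ^ 2 ^ k`. -/
def lacN (k : ℕ) : ℕ := 2 ^ 2 ^ k

/-- The `k`-th term `z ^ Nₖ / k!` of the lacunary series. -/
noncomputable def lacTerm (k : ℕ) (z : ℂ) : ℂ := z ^ lacN k / (k.factorial : ℂ)

/-- The lacunary series `∑ₖ z ^ (2 ^ 2 ^ k) / k!`. -/
noncomputable def lac (z : ℂ) : ℂ := ∑' k, lacTerm k z

lemma lacN_pos (k : ℕ) : (0 : ℝ) < lacN k := by
  unfold lacN; positivity

lemma summable_inv_factorial : Summable fun k : ℕ => (1 : ℝ) / (k.factorial : ℝ) := by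
  simpa using Real.summable_pow_div_factorial 1

lemma norm_lacTerm_le (k : ℕ) {z : ℂ} (hz : ‖z‖ ≤ 1) :
    ‖lacTerm k z‖ ≤ 1 / (k.factorial : ℝ) := by
  unfold lacTerm
  rw [norm_div, norm_pow, Complex.norm_natCast]
  gcongr
  exact pow_le_one₀ (norm_nonneg _) hz

lemma summable_lacTerm {z : ℂ} (hz : ‖z‖ ≤ 1) : Summable fun k => lacTerm k z :=
  Summable.of_norm_bounded summable_inv_factorial fun k => norm_lacTerm_le k hz

lemma continuousOn_lac : ContinuousOn lac (Metric.closedBall (0 : ℂ) 1) := by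
  refine continuousOn_tsum (u := fun k : ℕ => (1 : ℝ) / (k.factorial : ℝ)) ?_
    summable_inv_factorial ?_
  · intro k
    unfold lacTerm
    fun_prop
  · intro k z hz
    exact norm_lacTerm_le k (by simpa using hz)

lemma differentiableOn_lac : DifferentiableOn ℂ lac (Metric.ball (0 : ℂ) 1) := by
  refine Complex.differentiableOn_tsum_of_summable_norm
    (u := fun k : ℕ => (1 : ℝ) / (k.factorial : ℝ)) summable_inv_factorial ?_
    Metric.isOpen_ball ?_
  · intro k
    unfold lacTerm
    fun_prop
  · intro k z hz
    exact norm_lacTerm_le k (by simpa using (Metric.ball_subset_closedBall hz))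

/-! ### The modulus of continuity -/

lemma norm_exp_sub_exp_le (a b : ℝ) :
    ‖Complex.exp (a * Complex.I) - Complex.exp (b * Complex.I)‖ ≤ |a - b| := by
  have h : Complex.exp (a * Complex.I) - Complex.exp (b * Complex.I)
      = Complex.exp (b * Complex.I) * (Complex.exp (Complex.I * ((a - b : ℝ) : ℂ)) - 1) := by
    rw [mul_sub, ← Complex.exp_add, mul_one]
    congr 2
    push_cast
    ring
  rw [h, norm_mul, Complex.norm_exp_ofReal_mul_I, one_mul]
  exact Real.norm_exp_I_mul_ofReal_sub_one_le

lemma exp_pow_eq (θ : ℝ) (N : ℕ) :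
    Complex.exp (θ * Complex.I) ^ N = Complex.exp ((N * θ : ℝ) * Complex.I) := by
  rw [← Complex.exp_nat_mul]
  congr 1
  push_cast
  ring

/-- Interpolating between the bounds `2` and `Nₖ |θ - φ|` with exponent `2⁻ᵏ`. -/
lemma norm_lacTerm_sub_le (k : ℕ) {θ φ δ : ℝ} (h : |θ - φ| ≤ δ) :
    ‖lacTerm k (Complex.exp (θ * Complex.I)) - lacTerm k (Complex.exp (φ * Complex.I))‖
      ≤ 4 * δ ^ ((1 : ℝ) / 2 ^ k) / (k.factorial : ℝ) := by
  have hδ : 0 ≤ δ := (abs_nonneg _).trans h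
  have hN := lacN_pos k
  have hε : (0 : ℝ) < 1 / 2 ^ k := by positivity
  have hε1 : (1 : ℝ) / 2 ^ k ≤ 1 := by
    rw [div_le_one (by positivity)]; exact one_le_pow₀ (by norm_num)
  have hroot : ((lacN k : ℝ)) ^ ((1 : ℝ) / 2 ^ k) = 2 := by
    unfold lacN
    push_cast
    have := Real.pow_rpow_inv_natCast (x := 2) (n := 2 ^ k) (by norm_num) (by positivity)
    simpa using this
  have hmul : ((lacN k : ℝ) * δ) ^ ((1 : ℝ) / 2 ^ k) = 2 * δ ^ ((1 : ℝ) / 2 ^ k) := by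
    rw [Real.mul_rpow hN.le hδ, hroot]
  unfold lacTerm
  rw [← sub_div, norm_div, Complex.norm_natCast, exp_pow_eq, exp_pow_eq]
  gcongr
  rcases le_total ((lacN k : ℝ) * δ) 1 with h1 | h1
  · calc _ ≤ |(lacN k : ℝ) * θ - lacN k * φ| := norm_exp_sub_exp_le _ _
      _ = lacN k * |θ - φ| := by rw [← mul_sub, abs_mul, abs_of_pos hN]
      _ ≤ lacN k * δ := by gcongr
      _ ≤ ((lacN k : ℝ) * δ) ^ ((1 : ℝ) / 2 ^ k) :=
          Real.self_le_rpow_of_le_one (by positivity) h1 hε1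
      _ ≤ _ := by
          rw [hmul]
          have := Real.rpow_nonneg hδ ((1 : ℝ) / 2 ^ k)
          linarith
  · calc _ ≤ ‖Complex.exp ((lacN k * θ : ℝ) * Complex.I)‖
          + ‖Complex.exp ((lacN k * φ : ℝ) * Complex.I)‖ := norm_sub_le _ _
      _ = 2 * 1 := by
          rw [Complex.norm_exp_ofReal_mul_I, Complex.norm_exp_ofReal_mul_I]; norm_num
      _ ≤ 2 * ((lacN k : ℝ) * δ) ^ ((1 : ℝ) / 2 ^ k) := by
          gcongr
          exact Real.one_le_rpow h1 hε.le
      _ = _ := by rw [hmul]; ring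

lemma summable_modulus {δ : ℝ} (hδ : 0 ≤ δ) (hδ1 : δ ≤ 1) :
    Summable fun k : ℕ => 4 * δ ^ ((1 : ℝ) / 2 ^ k) / (k.factorial : ℝ) := by
  refine Summable.of_nonneg_of_le (fun k => by positivity) (fun k => ?_)
    (summable_inv_factorial.mul_left 4)
  rw [mul_one_div]
  gcongr
  have := Real.rpow_le_one hδ hδ1 (z := (1 : ℝ) / 2 ^ k) (by positivity)
  linarith

lemma omegaMod_lac_le {δ : ℝ} (hδ : 0 ≤ δ) (hδ1 : δ ≤ 1) :
    omegaMod lac δ ≤ ∑' k : ℕ, 4 * δ ^ ((1 : ℝ) / 2 ^ k) / (k.factorial : ℝ) := by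
  refine Real.sSup_le ?_ (tsum_nonneg fun k => by positivity)
  rintro d ⟨θ, φ, h, rfl⟩
  unfold lac
  rw [← (summable_lacTerm (Complex.norm_exp_ofReal_mul_I θ).le).tsum_sub
    (summable_lacTerm (Complex.norm_exp_ofReal_mul_I φ).le)]
  exact tsum_of_norm_bounded (summable_modulus hδ hδ1).hasSum
    fun k => norm_lacTerm_sub_le k h

/-! ### Log-Dini continuity -/

/-- `log(1/x)ⁿ x ^ (ε - 1)` has integral `O(ε ^ (-(n + 1)))`: with `η = ε / (2 (n + 1))` the bound
`log(1/x) ≤ x ^ (-η) / η` costs at most half of the exponent `ε`. -/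
lemma lintegral_log_rpow_le (n : ℕ) {ε : ℝ} (hε : 0 < ε) :
    ∫⁻ x in Set.Ioo (0 : ℝ) 1, ENNReal.ofReal (Real.log (1 / x) ^ n * x ^ ε / x)
      ≤ ENNReal.ofReal ((2 * (n + 1) / ε) ^ n * (2 / ε)) := by
  set η : ℝ := ε / (2 * (n + 1)) with hη
  have hη0 : 0 < η := by positivity
  have hnη : n * η ≤ ε / 2 := by
    rw [hη, mul_div_assoc', div_le_div_iff₀ (by positivity) (by positivity)]
    nlinarith
  have hpt : ∀ x ∈ Set.Ioo (0 : ℝ) 1, Real.log (1 / x) ^ n * x ^ ε / x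
      ≤ (2 * (n + 1) / ε) ^ n * x ^ (ε / 2 - 1) := by
    rintro x ⟨hx0, hx1⟩
    have hlog0 : 0 ≤ Real.log (1 / x) := Real.log_nonneg (by rw [le_div_iff₀ hx0]; linarith)
    have hlog : Real.log (1 / x) ≤ (2 * (n + 1) / ε) * x ^ (-η) := by
      have := Real.log_le_rpow_div (x := 1 / x) (by positivity) hη0
      rw [one_div, Real.inv_rpow hx0.le, ← Real.rpow_neg hx0.le] at this
      rw [one_div]
      refine this.trans (le_of_eq ?_)
      rw [hη]
      field_simp
    calc Real.log (1 / x) ^ n * x ^ ε / x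
        ≤ ((2 * (n + 1) / ε) * x ^ (-η)) ^ n * x ^ ε / x := by gcongr
      _ = (2 * (n + 1) / ε) ^ n * x ^ (-η * n + ε - 1) := by
          rw [mul_pow, ← Real.rpow_natCast (x ^ (-η)) n, ← Real.rpow_mul hx0.le,
            Real.rpow_sub_one hx0.ne', Real.rpow_add hx0]
          ring
      _ ≤ _ := by
          refine mul_le_mul_of_nonneg_left ?_ (by positivity)
          exact Real.rpow_le_rpow_of_exponent_ge hx0 hx1.le (by linarith)
  have hint : IntervalIntegrable (fun x : ℝ => x ^ (ε / 2 - 1)) volume 0 1 :=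
    intervalIntegral.intervalIntegrable_rpow' (by linarith)
  have hval : ∫ x in Set.Ioo (0 : ℝ) 1, x ^ (ε / 2 - 1) = 2 / ε := by
    rw [← integral_Ioc_eq_integral_Ioo, ← intervalIntegral.integral_of_le zero_le_one,
      integral_rpow (Or.inl (by linarith))]
    rw [sub_add_cancel, Real.one_rpow, Real.zero_rpow (by positivity)]
    field_simp
    norm_num
  have hint' : IntegrableOn (fun x : ℝ => (2 * (n + 1) / ε) ^ n * x ^ (ε / 2 - 1))
      (Set.Ioo 0 1) := by
    refine Integrable.const_mul ?_ _
    exact ((intervalIntegrable_iff_integrableOn_Ioo_of_le zero_le_one).1 hint)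
  calc _ ≤ ∫⁻ x in Set.Ioo (0 : ℝ) 1,
        ENNReal.ofReal ((2 * (n + 1) / ε) ^ n * x ^ (ε / 2 - 1)) :=
        setLIntegral_mono' measurableSet_Ioo fun x hx => ENNReal.ofReal_le_ofReal (hpt x hx)
    _ = ENNReal.ofReal (∫ x in Set.Ioo (0 : ℝ) 1,
        (2 * (n + 1) / ε) ^ n * x ^ (ε / 2 - 1)) := by
        rw [ofReal_integral_eq_lintegral_ofReal hint']
        refine (ae_restrict_iff' measurableSet_Ioo).2 (ae_of_all _ fun x hx => ?_)
        have := hx.1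
        simp only [Pi.zero_apply]
        positivity
    _ = _ := by rw [integral_const_mul, hval]

lemma logDini_lac : LogDini lac := by
  intro n
  have hpt : ∀ x ∈ Set.Ioo (0 : ℝ) 1,
      ENNReal.ofReal (Real.log (1 / x) ^ n * omegaMod lac x / x)
        ≤ ∑' k : ℕ, ENNReal.ofReal (4 / (k.factorial : ℝ)) *
          ENNReal.ofReal (Real.log (1 / x) ^ n * x ^ ((1 : ℝ) / 2 ^ k) / x) := by
    rintro x ⟨hx0, hx1⟩
    have hlog0 : 0 ≤ Real.log (1 / x) := Real.log_nonneg (by rw [le_div_iff₀ hx0]; linarith)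
    have hs := (summable_modulus hx0.le hx1.le).mul_left (Real.log (1 / x) ^ n / x)
    calc ENNReal.ofReal (Real.log (1 / x) ^ n * omegaMod lac x / x)
        ≤ ENNReal.ofReal (∑' k : ℕ, Real.log (1 / x) ^ n / x *
            (4 * x ^ ((1 : ℝ) / 2 ^ k) / (k.factorial : ℝ))) := by
          refine ENNReal.ofReal_le_ofReal ?_
          rw [tsum_mul_left, mul_div_right_comm]
          exact mul_le_mul_of_nonneg_left (omegaMod_lac_le hx0.le hx1.le) (by positivity)
      _ = ∑' k : ℕ, ENNReal.ofReal (Real.log (1 / x) ^ n / x *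
            (4 * x ^ ((1 : ℝ) / 2 ^ k) / (k.factorial : ℝ))) :=
          ENNReal.ofReal_tsum_of_nonneg (fun k => by positivity) hs
      _ = _ := by
          refine tsum_congr fun k => ?_
          rw [← ENNReal.ofReal_mul (by positivity)]
          congr 1
          ring
  have hsum : Summable fun k : ℕ => 4 / (k.factorial : ℝ) *
      ((2 * (n + 1) / ((1 : ℝ) / 2 ^ k)) ^ n * (2 / ((1 : ℝ) / 2 ^ k))) := by
    refine ((Real.summable_pow_div_factorial (2 ^ (n + 1))).mul_left
      (8 * (2 * ((n : ℝ) + 1)) ^ n)).congr fun k => ?_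
    have : ((2 : ℝ) ^ (n + 1)) ^ k = (2 ^ k) ^ n * 2 ^ k := by
      rw [← pow_succ, ← pow_mul, ← pow_mul, mul_comm]
    rw [this, div_div_eq_mul_div, div_div_eq_mul_div, div_one, div_one, mul_pow _ ((2 : ℝ) ^ k)]
    ring
  refine ne_top_of_le_ne_top hsum.tsum_ofReal_ne_top
    ((setLIntegral_mono' measurableSet_Ioo hpt).trans ?_)
  rw [lintegral_tsum fun k => by fun_prop]
  refine ENNReal.tsum_le_tsum fun k => ?_
  rw [lintegral_const_mul' _ _ ENNReal.ofReal_ne_top, ENNReal.ofReal_mul (by positivity)]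
  gcongr
  exact lintegral_log_rpow_le n (by positivity)

/-! ### Failure of Hölder continuity -/

/-- Every term of `F(1) - F(e ^ (iφ))` has nonnegative real part, and at `φ = π / Nₖ` the `k`-th
one equals `2 / k!`. -/
lemma two_div_factorial_le (k : ℕ) :
    2 / (k.factorial : ℝ) ≤ ‖lac (Complex.exp ((0 : ℝ) * Complex.I))
      - lac (Complex.exp ((Real.pi / lacN k : ℝ) * Complex.I))‖ := by
  set φ : ℝ := Real.pi / lacN k with hφ
  have hs := Complex.hasSum_re
    ((summable_lacTerm (Complex.norm_exp_ofReal_mul_I 0).le).hasSum.sub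
    (summable_lacTerm (Complex.norm_exp_ofReal_mul_I φ).le).hasSum)
  have hre : ∀ j, (lacTerm j (Complex.exp ((0 : ℝ) * Complex.I))
      - lacTerm j (Complex.exp (φ * Complex.I))).re
      = (1 - Real.cos (lacN j * φ)) / (j.factorial : ℝ) := by
    intro j
    unfold lacTerm
    rw [exp_pow_eq, exp_pow_eq, ← sub_div, Complex.div_natCast_re, Complex.sub_re,
      Complex.exp_ofReal_mul_I_re, Complex.exp_ofReal_mul_I_re]
    simp
  have hk := le_hasSum hs k fun j _ => by
    rw [hre]
    have := Real.cos_le_one (lacN j * φ)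
    exact div_nonneg (by linarith) (by positivity)
  rw [hre, hφ, mul_div_cancel₀ _ (lacN_pos k).ne', Real.cos_pi] at hk
  refine le_trans ?_ (hk.trans (Complex.re_le_norm _))
  norm_num

lemma not_holder_lac (α : ℝ) (hα : 0 < α) (M : ℝ)
    (hM : ∀ θ φ : ℝ, |θ - φ| ≤ Real.pi →
      ‖lac (Complex.exp (θ * Complex.I)) - lac (Complex.exp (φ * Complex.I))‖ ≤
        M * |θ - φ| ^ α) : False := by
  have key : ∀ k : ℕ, 2 / (k.factorial : ℝ) ≤ M * (Real.pi / lacN k) ^ α := by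
    intro k
    have hN := lacN_pos k
    have h1 : (1 : ℝ) ≤ lacN k := by exact_mod_cast (by exact_mod_cast hN : 0 < lacN k)
    have hpos : 0 < Real.pi / lacN k := div_pos Real.pi_pos hN
    have habs : |0 - Real.pi / lacN k| = Real.pi / lacN k := by
      rw [zero_sub, abs_neg, abs_of_pos hpos]
    have := hM 0 (Real.pi / lacN k) (by
      rw [habs]; exact div_le_self Real.pi_pos.le h1)
    rw [habs] at this
    exact (two_div_factorial_le k).trans this
  have hMpos : 0 < M := by
    by_contra hneg
    have h0 := key 0
    have : M * (Real.pi / lacN 0) ^ α ≤ 0 :=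
      mul_nonpos_of_nonpos_of_nonneg (not_lt.1 hneg)
        (Real.rpow_nonneg (div_nonneg Real.pi_pos.le (lacN_pos 0).le) _)
    norm_num at h0
    linarith
  -- Taking logarithms, with `log k! ≤ k ^ 2`, turns the bound into one that is false for large `k`.
  set C : ℝ := Real.log M + α * Real.log Real.pi - Real.log 2 with hC
  have hlog : ∀ k : ℕ, α * Real.log 2 * 2 ^ k ≤ C + (k : ℝ) ^ 2 := by
    intro k
    have hN := lacN_pos k
    have hf : (0 : ℝ) < k.factorial := by positivity
    have h := Real.log_le_log (by positivity) (key k)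
    have hpos : 0 < Real.pi / lacN k := div_pos Real.pi_pos hN
    rw [Real.log_div two_ne_zero hf.ne', Real.log_mul hMpos.ne' (Real.rpow_pos_of_pos hpos _).ne',
      Real.log_rpow hpos, Real.log_div Real.pi_ne_zero hN.ne'] at h
    have hlN : Real.log (lacN k) = 2 ^ k * Real.log 2 := by
      unfold lacN
      push_cast
      rw [Real.log_pow]
      push_cast
      ring
    have hfac : Real.log k.factorial ≤ (k : ℝ) ^ 2 := by
      calc Real.log k.factorial ≤ Real.log ((k : ℝ) ^ k) :=
            Real.log_le_log hf (by exact_mod_cast Nat.factorial_le_pow k)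
        _ = k * Real.log k := Real.log_pow _ _
        _ ≤ k * k := by
            gcongr
            exact Real.log_le_self (by positivity)
        _ = _ := by ring
    rw [hlN] at h
    linarith
  have ht : Filter.Tendsto (fun k : ℕ => (C + (k : ℝ) ^ 2) / 2 ^ k) Filter.atTop (nhds 0) := by
    have h1 := tendsto_pow_const_div_const_pow_of_one_lt 2 (r := (2 : ℝ)) (by norm_num)
    have h0 := (tendsto_pow_const_div_const_pow_of_one_lt 0 (r := (2 : ℝ)) (by norm_num)).const_mul C
    have := h0.add h1
    simp only [mul_zero, add_zero, pow_zero] at this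
    refine this.congr fun k => ?_
    ring
  have hle : α * Real.log 2 ≤ 0 := ge_of_tendsto' ht fun k => by
    rw [le_div_iff₀ (by positivity)]
    exact hlog k
  have : 0 < α * Real.log 2 := mul_pos hα (Real.log_pos (by norm_num))
  linarith

/-- There exists a function holomorphic on the unit disc, extending
continuously to the closed disc, whose boundary value is log-Dini continuous but not
Hölder continuous of any exponent `α ∈ (0,1]`. -/
theorem stmt15 :
    ∃ f F : ℂ → ℂ, DifferentiableOn ℂ f (Metric.ball (0:ℂ) 1) ∧
      ContinuousOn F (Metric.closedBall (0:ℂ) 1) ∧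
      (∀ z ∈ Metric.ball (0:ℂ) 1, F z = f z) ∧ LogDini F ∧
      ∀ α : ℝ, 0 < α → α ≤ 1 →
        ¬ ∃ M : ℝ, ∀ θ φ : ℝ, |θ - φ| ≤ Real.pi →
          ‖F (Complex.exp (θ * Complex.I)) - F (Complex.exp (φ * Complex.I))‖ ≤
            M * |θ - φ| ^ α := by
  refine ⟨lac, lac, differentiableOn_lac, continuousOn_lac, fun _ _ => rfl, logDini_lac, ?_⟩
  rintro α hα - ⟨M, hM⟩
  exact not_holder_lac α hα M hM
end
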